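/- (Localized coercivity.) Let Φ : ℝ^d → ℝ be a positive smooth radial function with Φ(x) = 1 for |x| ≤ 1, Φ(x) = e^{−|x|} for |x| ≥ 2, 0 < Φ ≤ 1, and |∇Φ(x)| ≤ C_Φ Φ(x) for all x, and set Φ_A(x) := Φ(x/A) for A > 0. Assume the penalized coercivity: there exist ν₁, ν₂ > 0 such that for every H¹ function f = f₁ + i f₂, B(f) ≥ ν₁ ‖f‖²_{H¹} − ν₂ ( (∫ Q f₁)² + Σ_j (∫ x_j Q f₁)² + (∫ |x|² Q f₁)² + Σ_j (∫ ∂_{x_j}Q f₂)² + (∫ ΛQ f₂)² + (∫ ρ f₂)² ). Then there exist ν > 0 and A₀ > 0 such that for all A ≥ A₀ and all f = f₁ + i f₂ ∈ K: ∫ |∇f|² Φ_A + |f|² − (1+4/d) Q^{4/d} f₁² − Q^{4/d} f₂² dx ≥ ν ∫ (|∇f|² + |f|²) Φ_A dx. -/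

import Mathlib

noncomputable section

open MeasureTheory

/-- Partial derivative of a real-valued function on `ℝ^d` in the `i`-th coordinate
direction. -/
def pd {d : ℕ} (f : EuclideanSpace ℝ (Fin d) → ℝ) (i : Fin d)
    (x : EuclideanSpace ℝ (Fin d)) : ℝ :=
  fderiv ℝ f x (EuclideanSpace.single i 1)

/-- Laplacian of a real-valued function on `ℝ^d`. -/
def lap {d : ℕ} (f : EuclideanSpace ℝ (Fin d) → ℝ)
    (x : EuclideanSpace ℝ (Fin d)) : ℝ :=
  ∑ i, pd (pd f i) i x

/-- The complex-valued function `f = f₁ + i f₂` is an `H¹` function: `f₁, f₂` are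
continuously differentiable, and `f` and `∇f` are square integrable. -/
def IsH1 {d : ℕ} (f₁ f₂ : EuclideanSpace ℝ (Fin d) → ℝ) : Prop :=
  ContDiff ℝ 1 f₁ ∧ ContDiff ℝ 1 f₂ ∧
  Integrable (fun x : EuclideanSpace ℝ (Fin d) => f₁ x ^ 2 + f₂ x ^ 2) ∧
  Integrable (fun x : EuclideanSpace ℝ (Fin d) =>
    ∑ i, (pd f₁ i x ^ 2 + pd f₂ i x ^ 2))

/-- The squared `H¹` norm `∫ |f|² + |∇f|²` of `f = f₁ + i f₂`. -/
def H1normSq {d : ℕ} (f₁ f₂ : EuclideanSpace ℝ (Fin d) → ℝ) : ℝ :=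
  (∫ x : EuclideanSpace ℝ (Fin d), (f₁ x ^ 2 + f₂ x ^ 2))
    + ∫ x : EuclideanSpace ℝ (Fin d), ∑ i, (pd f₁ i x ^ 2 + pd f₂ i x ^ 2)

/-- The quadratic form `B(f) = ⟨L₊f₁, f₁⟩ + ⟨L₋f₂, f₂⟩` associated to the linearized
operators around the ground state `Q`. -/
def Bform {d : ℕ} (Q f₁ f₂ : EuclideanSpace ℝ (Fin d) → ℝ) : ℝ :=
  (∫ x : EuclideanSpace ℝ (Fin d),
      ((∑ i, pd f₁ i x ^ 2) + f₁ x ^ 2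
        - (1 + 4 / (d : ℝ)) * Q x ^ ((4 : ℝ) / d) * f₁ x ^ 2))
    + ∫ x : EuclideanSpace ℝ (Fin d),
        ((∑ i, pd f₂ i x ^ 2) + f₂ x ^ 2 - Q x ^ ((4 : ℝ) / d) * f₂ x ^ 2)

/-- Membership in the set `K` of `H¹` functions `f = f₁ + i f₂` satisfying the
orthogonality conditions. -/
def InKset {d : ℕ} (Q ρ f₁ f₂ : EuclideanSpace ℝ (Fin d) → ℝ) : Prop :=
  (∫ x : EuclideanSpace ℝ (Fin d), Q x * f₁ x) = 0 ∧
  (∀ j, (∫ x : EuclideanSpace ℝ (Fin d), x j * Q x * f₁ x) = 0) ∧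
  (∫ x : EuclideanSpace ℝ (Fin d), ‖x‖ ^ 2 * Q x * f₁ x) = 0 ∧
  (∀ j, (∫ x : EuclideanSpace ℝ (Fin d), pd Q j x * f₂ x) = 0) ∧
  (∫ x : EuclideanSpace ℝ (Fin d),
      ((d : ℝ) / 2 * Q x + ∑ i, x i * pd Q i x) * f₂ x) = 0 ∧
  (∫ x : EuclideanSpace ℝ (Fin d), ρ x * f₂ x) = 0

/-!
Testing the penalized coercivity on `f = f₁` and on `f = i f₂` separates `L₊` from `L₋`, so only one
real function `u` with a potential `V` and orthogonal to weights `p` has to be considered at a time.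
Test on `√Φ_A u`. Since `|∇Φ_A| ≤ (C / A) Φ_A`, the density `|∇(√Φ_A u)|²` differs from `Φ_A |∇u|²`
by at most `O(1 / A) (|∇u|² + u²) Φ_A`. The localized form does not weigh `u²` by the cutoff, which
leaves over the mass `∫ (1 - Φ_A) u²`, and half of it survives the potential because `V` is small
wherever `Φ_A ≠ 1`. The truncation breaks the orthogonality conditions, but only by
`⟨p, √Φ_A u⟩² ≤ (∫ (1 - √Φ_A) p²) (∫ (1 - Φ_A) u²)`, which that mass absorbs for large `A`.
-/

open Filter Topology Asymptotics
open scoped ENNReal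

section MeasureSpace

variable {α : Type*} [MeasurableSpace α] {μ : Measure α} {f g q ψ : α → ℝ}

theorem sq_integral_mul_le (hf : MemLp f 2 μ) (hg : MemLp g 2 μ) :
    (∫ x, f x * g x ∂μ) ^ 2 ≤ (∫ x, f x ^ 2 ∂μ) * ∫ x, g x ^ 2 ∂μ := by
  have inner_toLp {u v : α → ℝ} (hu : MemLp u 2 μ) (hv : MemLp v 2 μ) :
      inner ℝ (hu.toLp u) (hv.toLp v) = ∫ x, u x * v x ∂μ := by
    rw [L2.inner_def]
    refine integral_congr_ae ?_
    filter_upwards [hu.coeFn_toLp, hv.coeFn_toLp] with x hux hvx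
    rw [hux, hvx, real_inner_eq_re_inner, RCLike.inner_apply', conj_trivial, RCLike.re_to_real]
  simpa only [inner_toLp, ← sq] using real_inner_mul_inner_self_le (hf.toLp f) (hg.toLp g)

theorem memLp_mul_of_mem_Icc (hψ : AEStronglyMeasurable ψ μ) (h01 : ∀ x, ψ x ∈ Set.Icc 0 1)
    {p : ℝ≥0∞} (hf : MemLp f p μ) : MemLp (fun x => ψ x * f x) p μ := by
  refine hf.of_le (hψ.mul hf.1) (ae_of_all _ fun x => ?_)
  rw [norm_mul, Real.norm_of_nonneg (h01 x).1]
  exact mul_le_of_le_one_left (norm_nonneg _) (h01 x).2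

-- Orthogonality turns `∫ q ψ f` into `-∫ (1 - ψ) q f`, which Cauchy-Schwarz splits evenly.
theorem sq_integral_mul_cutoff_le (hψ : AEStronglyMeasurable ψ μ) (h01 : ∀ x, ψ x ∈ Set.Icc 0 1)
    (hq : MemLp q 2 μ) (hf : MemLp f 2 μ) (hqf : ∫ x, q x * f x ∂μ = 0) :
    (∫ x, q x * (ψ x * f x) ∂μ) ^ 2 ≤
      (∫ x, (1 - ψ x) * q x ^ 2 ∂μ) * ∫ x, (1 - ψ x ^ 2) * f x ^ 2 ∂μ := by
  set w : α → ℝ := fun x => √(1 - ψ x)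
  have w_sq (x) : w x ^ 2 = 1 - ψ x := Real.sq_sqrt (sub_nonneg.2 (h01 x).2)
  have memLp_w_mul {h : α → ℝ} (hh : MemLp h 2 μ) : MemLp (fun x => w x * h x) 2 μ :=
    memLp_mul_of_mem_Icc (Real.continuous_sqrt.comp_aestronglyMeasurable
      (aestronglyMeasurable_const.sub hψ))
      (fun x => ⟨Real.sqrt_nonneg _, Real.sqrt_le_one.2 (sub_le_self 1 (h01 x).1)⟩) hh
  have integral_eq : ∫ x, q x * (ψ x * f x) ∂μ = -∫ x, (w x * q x) * (w x * f x) ∂μ := by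
    have hsub := integral_sub (hq.integrable_mul hf)
      (hq.integrable_mul (memLp_mul_of_mem_Icc hψ h01 hf))
    have hcongr : ∫ x, (w x * q x) * (w x * f x) ∂μ
        = ∫ x, ((q * f) x - (q * fun x => ψ x * f x) x) ∂μ :=
      integral_congr_ae <| ae_of_all _ fun x => by
        simp only [Pi.mul_apply]
        linear_combination (q x * f x) * w_sq x
    rw [hcongr, hsub]
    simp only [Pi.mul_apply, hqf, zero_sub, neg_neg]
  have sq_le : ∫ x, (w x * f x) ^ 2 ∂μ ≤ ∫ x, (1 - ψ x ^ 2) * f x ^ 2 ∂μ := by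
    refine integral_mono_of_nonneg (ae_of_all _ fun x => sq_nonneg _)
      (((hf.integrable_sq).sub (memLp_mul_of_mem_Icc hψ h01 hf).integrable_sq).congr
        (ae_of_all _ fun x => by simp only [Pi.sub_apply]; ring)) (ae_of_all _ fun x => ?_)
    simp only [mul_pow, w_sq]
    gcongr
    exact pow_le_of_le_one (h01 x).1 (h01 x).2 two_ne_zero
  calc (∫ x, q x * (ψ x * f x) ∂μ) ^ 2
      = (∫ x, (w x * q x) * (w x * f x) ∂μ) ^ 2 := by rw [integral_eq, neg_sq]
    _ ≤ (∫ x, (w x * q x) ^ 2 ∂μ) * ∫ x, (w x * f x) ^ 2 ∂μ :=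
        sq_integral_mul_le (memLp_w_mul hq) (memLp_w_mul hf)
    _ ≤ (∫ x, (w x * q x) ^ 2 ∂μ) * ∫ x, (1 - ψ x ^ 2) * f x ^ 2 ∂μ := by gcongr
    _ = _ := by simp only [mul_pow, w_sq]

theorem tendsto_integral_one_sub_mul {ι : Type*} {l : Filter ι} [l.IsCountablyGenerated]
    {ψ : ι → α → ℝ} (hψ : ∀ᶠ i in l, AEStronglyMeasurable (ψ i) μ)
    (h01 : ∀ᶠ i in l, ∀ x, ψ i x ∈ Set.Icc 0 1) (hlim : ∀ x, Tendsto (ψ · x) l (𝓝 1))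
    (hg : Integrable g μ) : Tendsto (fun i => ∫ x, (1 - ψ i x) * g x ∂μ) l (𝓝 0) := by
  rw [← integral_zero α ℝ (μ := μ)]
  refine tendsto_integral_filter_of_dominated_convergence (fun x => ‖g x‖)
    (hψ.mono fun i hi => (aestronglyMeasurable_const.sub hi).mul hg.1)
    (h01.mono fun i hi => ae_of_all _ fun x => ?_) hg.norm (ae_of_all _ fun x => ?_)
  · rw [norm_mul, Real.norm_of_nonneg (sub_nonneg.2 (hi x).2)]
    exact mul_le_of_le_one_left (norm_nonneg _) (by linarith [(hi x).1])
  · simpa using ((hlim x).const_sub 1).mul_const (g x)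

end MeasureSpace

section PartialDerivatives

variable {d : ℕ} {u v χ : EuclideanSpace ℝ (Fin d) → ℝ}

/-- The squared length `|∇u|²` of the gradient. -/
def gradSq (u : EuclideanSpace ℝ (Fin d) → ℝ) (x : EuclideanSpace ℝ (Fin d)) : ℝ :=
  ∑ i, pd u i x ^ 2

theorem gradSq_nonneg (u : EuclideanSpace ℝ (Fin d) → ℝ) (x : EuclideanSpace ℝ (Fin d)) :
    0 ≤ gradSq u x :=
  Finset.sum_nonneg fun _ _ => sq_nonneg _

theorem continuous_pd (hu : ContDiff ℝ 1 u) (i : Fin d) : Continuous (pd u i) :=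
  (hu.continuous_fderiv one_ne_zero).clm_apply continuous_const

theorem continuous_gradSq (hu : ContDiff ℝ 1 u) : Continuous (gradSq u) :=
  continuous_finsetSum _ fun i _ => (continuous_pd hu i).pow 2

theorem gradSq_zero (x : EuclideanSpace ℝ (Fin d)) : gradSq 0 x = 0 := by
  simp [gradSq, pd]

theorem pd_mul {x : EuclideanSpace ℝ (Fin d)} (hu : DifferentiableAt ℝ u x)
    (hv : DifferentiableAt ℝ v x) (i : Fin d) :
    pd (fun y => u y * v y) i x = u x * pd v i x + v x * pd u i x := by
  simp [pd, fderiv_fun_mul hu hv]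

theorem gradSq_comp_smul (u : EuclideanSpace ℝ (Fin d) → ℝ) (c : ℝ)
    (x : EuclideanSpace ℝ (Fin d)) :
    gradSq (fun y => u (c • y)) x = c ^ 2 * gradSq u (c • x) := by
  simp [gradSq, pd, fderiv_comp_smul, mul_pow, Finset.mul_sum]

theorem gradSq_sqrt {x : EuclideanSpace ℝ (Fin d)} (hu : DifferentiableAt ℝ u x)
    (hpos : 0 < u x) : gradSq (fun y => √(u y)) x = gradSq u x / (4 * u x) := by
  rw [gradSq, gradSq, Finset.sum_div]
  refine Finset.sum_congr rfl fun i _ => ?_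
  simp only [pd, fderiv_sqrt hu hpos.ne', smul_apply, smul_eq_mul, mul_pow,
    div_pow, Real.sq_sqrt hpos.le]
  ring

theorem abs_add_sq_sub_sq_le {ε : ℝ} (hε : 0 < ε) (a b : ℝ) :
    |(a + b) ^ 2 - a ^ 2| ≤ ε * a ^ 2 + (1 + ε⁻¹) * b ^ 2 := by
  have young : |2 * a * b| ≤ ε * a ^ 2 + ε⁻¹ * b ^ 2 := by
    have expand_add : ε * a ^ 2 + ε⁻¹ * b ^ 2 + 2 * a * b = ε⁻¹ * (ε * a + b) ^ 2 := by
      field_simp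
      ring
    have expand_sub : ε * a ^ 2 + ε⁻¹ * b ^ 2 - 2 * a * b = ε⁻¹ * (ε * a - b) ^ 2 := by
      field_simp
      ring
    have nonneg_add : 0 ≤ ε⁻¹ * (ε * a + b) ^ 2 := by positivity
    have nonneg_sub : 0 ≤ ε⁻¹ * (ε * a - b) ^ 2 := by positivity
    exact abs_le.2 ⟨by linarith, by linarith⟩
  calc |(a + b) ^ 2 - a ^ 2| = |2 * a * b + b ^ 2| := by ring_nf
    _ ≤ |2 * a * b| + b ^ 2 := (abs_add_le _ _).trans_eq (by rw [abs_sq])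
    _ ≤ ε * a ^ 2 + (1 + ε⁻¹) * b ^ 2 := by linarith

theorem abs_gradSq_mul_sub_le {ε : ℝ} (hε : 0 < ε) {x : EuclideanSpace ℝ (Fin d)}
    (hu : DifferentiableAt ℝ u x) (hv : DifferentiableAt ℝ v x) :
    |gradSq (fun y => u y * v y) x - u x ^ 2 * gradSq v x| ≤
      ε * (u x ^ 2 * gradSq v x) + (1 + ε⁻¹) * (v x ^ 2 * gradSq u x) := by
  simp only [gradSq, pd_mul hu hv, Finset.mul_sum, ← Finset.sum_sub_distrib,
    ← Finset.sum_add_distrib, ← mul_pow]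
  exact (Finset.abs_sum_le_sum_abs _ _).trans
    (Finset.sum_le_sum fun i _ => abs_add_sq_sub_sq_le hε _ _)

end PartialDerivatives

section Forms

variable {d : ℕ} {ι : Type*} [Fintype ι]

/-- The real-valued counterpart of `IsH1`: `u` is continuously differentiable, and `u` and `∇u`
are square integrable. -/
structure IsRealH1 (u : EuclideanSpace ℝ (Fin d) → ℝ) : Prop where
  contDiff : ContDiff ℝ 1 u
  memLp : MemLp u 2
  integrable_gradSq : Integrable (gradSq u)

/-- The energy `∫ (|∇u|² + u²) χ`; for `χ = 1` it is the squared `H¹` norm. -/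
def localizedEnergy (χ u : EuclideanSpace ℝ (Fin d) → ℝ) : ℝ :=
  ∫ x, (gradSq u x + u x ^ 2) * χ x

/-- The form `∫ |∇u|² χ + u² - V u²`, in which `χ` weighs the gradient term only; for `χ = 1` it is
the quadratic form of the operator `-Δ + 1 - V`. -/
def localizedForm (χ V u : EuclideanSpace ℝ (Fin d) → ℝ) : ℝ :=
  ∫ x, (gradSq u x * χ x + u x ^ 2 - V x * u x ^ 2)

/-- The sum `∑ i, ⟨p i, u⟩²` of the squared pairings of `u` with a family of weights. -/
def penalty (p : ι → EuclideanSpace ℝ (Fin d) → ℝ) (u : EuclideanSpace ℝ (Fin d) → ℝ) : ℝ :=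
  ∑ i, (∫ x, p i x * u x) ^ 2

/-- The form of `-Δ + 1 - V` dominates `ν₁` times the squared `H¹` norm, up to `ν₂` times the
penalty of the weights `p`. -/
def IsPenalizedCoercive (V : EuclideanSpace ℝ (Fin d) → ℝ)
    (p : ι → EuclideanSpace ℝ (Fin d) → ℝ) (ν₁ ν₂ : ℝ) : Prop :=
  ∀ u, IsRealH1 u → ν₁ * localizedEnergy 1 u - ν₂ * penalty p u ≤ localizedForm 1 V u

variable {V χ u : EuclideanSpace ℝ (Fin d) → ℝ}

theorem localizedEnergy_zero (χ : EuclideanSpace ℝ (Fin d) → ℝ) : localizedEnergy χ 0 = 0 := by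
  simp [localizedEnergy, gradSq_zero]

theorem localizedForm_zero (χ V : EuclideanSpace ℝ (Fin d) → ℝ) : localizedForm χ V 0 = 0 := by
  simp [localizedForm, gradSq_zero]

theorem penalty_zero (p : ι → EuclideanSpace ℝ (Fin d) → ℝ) : penalty p 0 = 0 := by
  simp [penalty]

theorem isRealH1_zero : IsRealH1 (0 : EuclideanSpace ℝ (Fin d) → ℝ) where
  contDiff := contDiff_const
  memLp := MemLp.zero
  integrable_gradSq := (integrable_zero _ _ _).congr (ae_of_all _ fun x => (gradSq_zero x).symm)

theorem IsRealH1.integrable_energy (hu : IsRealH1 u) (hχ : MemLp χ ∞) :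
    Integrable fun x => (gradSq u x + u x ^ 2) * χ x :=
  (hu.integrable_gradSq.add hu.memLp.integrable_sq).mul_of_top_left hχ

theorem IsRealH1.integrable_form (hu : IsRealH1 u) (hχ : MemLp χ ∞) (hV : MemLp V ∞) :
    Integrable fun x => gradSq u x * χ x + u x ^ 2 - V x * u x ^ 2 :=
  ((hu.integrable_gradSq.mul_of_top_left hχ).add hu.memLp.integrable_sq).sub
    (hu.memLp.integrable_sq.mul_of_top_right hV)

end Forms

section SlowCutoff

variable {d : ℕ} {ι : Type*} [Fintype ι] {V χ u : EuclideanSpace ℝ (Fin d) → ℝ} {ε : ℝ}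

/-- A cutoff with values in `(0, 1]` whose logarithmic gradient is at most `ε`. -/
structure IsSlowCutoff (χ : EuclideanSpace ℝ (Fin d) → ℝ) (ε : ℝ) : Prop where
  contDiff : ContDiff ℝ 1 χ
  pos : ∀ x, 0 < χ x
  le_one : ∀ x, χ x ≤ 1
  sqrt_gradSq_le : ∀ x, √(gradSq χ x) ≤ ε * χ x

theorem IsSlowCutoff.mono {ε' : ℝ} (hχ : IsSlowCutoff χ ε) (h : ε ≤ ε') : IsSlowCutoff χ ε' where
  __ := hχ
  sqrt_gradSq_le x := (hχ.sqrt_gradSq_le x).trans (by gcongr; exact (hχ.pos x).le)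

theorem IsSlowCutoff.comp_smul (hχ : IsSlowCutoff χ ε) (c : ℝ) :
    IsSlowCutoff (fun x => χ (c • x)) (|c| * ε) where
  contDiff := hχ.contDiff.comp (contDiff_id.const_smul c)
  pos x := hχ.pos (c • x)
  le_one x := hχ.le_one (c • x)
  sqrt_gradSq_le x := by
    rw [gradSq_comp_smul, Real.sqrt_mul (sq_nonneg c), Real.sqrt_sq_eq_abs, mul_assoc]
    gcongr
    exact hχ.sqrt_gradSq_le (c • x)

theorem IsSlowCutoff.eventually_comp_inv_smul {C : ℝ} (hχ : IsSlowCutoff χ C) (hε : 0 < ε) :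
    ∀ᶠ A : ℝ in atTop, IsSlowCutoff (fun x => χ (A⁻¹ • x)) ε := by
  have lim : Tendsto (fun A : ℝ => |A⁻¹| * C) atTop (𝓝 0) := by
    simpa using (tendsto_inv_atTop_zero.abs).mul_const C
  filter_upwards [lim.eventually_le_const hε] with A hA
  exact (hχ.comp_smul A⁻¹).mono hA

theorem IsSlowCutoff.gradSq_le (hχ : IsSlowCutoff χ ε) (x : EuclideanSpace ℝ (Fin d)) :
    gradSq χ x ≤ (ε * χ x) ^ 2 :=
  Real.sqrt_le_iff.1 (hχ.sqrt_gradSq_le x) |>.2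

theorem IsSlowCutoff.memLp_top (hχ : IsSlowCutoff χ ε) : MemLp χ ∞ :=
  memLp_top_of_bound hχ.contDiff.continuous.aestronglyMeasurable 1 <| ae_of_all _ fun x => by
    rw [Real.norm_of_nonneg (hχ.pos x).le]
    exact hχ.le_one x

theorem IsSlowCutoff.contDiff_sqrt (hχ : IsSlowCutoff χ ε) : ContDiff ℝ 1 fun x => √(χ x) :=
  hχ.contDiff.sqrt fun x => (hχ.pos x).ne'

theorem IsSlowCutoff.sqrt_mem_Icc (hχ : IsSlowCutoff χ ε) (x : EuclideanSpace ℝ (Fin d)) :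
    √(χ x) ∈ Set.Icc 0 1 :=
  ⟨Real.sqrt_nonneg _, Real.sqrt_le_one.2 (hχ.le_one x)⟩

theorem IsSlowCutoff.abs_gradSq_sqrt_mul_sub_le (hχ : IsSlowCutoff χ ε) (hε : 0 < ε)
    (hε1 : ε ≤ 1) {x : EuclideanSpace ℝ (Fin d)} (hu : DifferentiableAt ℝ u x) :
    |gradSq (fun y => √(χ y) * u y) x - χ x * gradSq u x| ≤
      ε * ((gradSq u x + u x ^ 2) * χ x) := by
  have hpos := hχ.pos x
  have gradSq_sqrt_le : gradSq (fun y => √(χ y)) x ≤ ε ^ 2 * χ x / 4 := by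
    rw [gradSq_sqrt (hχ.contDiff.differentiable one_ne_zero x) hpos, div_le_div_iff₀ (by positivity)
      four_pos]
    nlinarith [hχ.gradSq_le x]
  have coefficient_le : (1 + ε⁻¹) * (ε ^ 2 / 4) ≤ ε := by
    field_simp
    linarith
  calc |gradSq (fun y => √(χ y) * u y) x - χ x * gradSq u x|
      ≤ ε * (χ x * gradSq u x) + (1 + ε⁻¹) * (u x ^ 2 * gradSq (fun y => √(χ y)) x) := by
        simpa only [Real.sq_sqrt hpos.le] using abs_gradSq_mul_sub_le hε
          (hχ.contDiff_sqrt.differentiable one_ne_zero x) hu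
    _ ≤ ε * (χ x * gradSq u x) + (1 + ε⁻¹) * (u x ^ 2 * (ε ^ 2 * χ x / 4)) := by gcongr
    _ = ε * (χ x * gradSq u x) + (1 + ε⁻¹) * (ε ^ 2 / 4) * (u x ^ 2 * χ x) := by ring
    _ ≤ ε * (χ x * gradSq u x) + ε * (u x ^ 2 * χ x) := by gcongr
    _ = ε * ((gradSq u x + u x ^ 2) * χ x) := by ring

theorem IsRealH1.sqrt_mul (hu : IsRealH1 u) (hχ : IsSlowCutoff χ ε) (hε : 0 < ε) (hε1 : ε ≤ 1) :
    IsRealH1 fun x => √(χ x) * u x where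
  contDiff := hχ.contDiff_sqrt.mul hu.contDiff
  memLp := memLp_mul_of_mem_Icc hχ.contDiff_sqrt.continuous.aestronglyMeasurable hχ.sqrt_mem_Icc
    hu.memLp
  integrable_gradSq := by
    have hcont := continuous_gradSq (hχ.contDiff_sqrt.mul hu.contDiff)
    refine ((hu.integrable_gradSq.mul_of_top_right hχ.memLp_top).add
      ((hu.integrable_energy hχ.memLp_top).const_mul ε)).mono' hcont.aestronglyMeasurable
      (ae_of_all _ fun x => ?_)
    rw [Real.norm_of_nonneg (gradSq_nonneg _ x)]
    exact sub_le_iff_le_add'.1 <| (le_abs_self _).trans <|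
      hχ.abs_gradSq_sqrt_mul_sub_le hε hε1 (hu.contDiff.differentiable one_ne_zero x)

theorem IsSlowCutoff.localizedEnergy_le (hχ : IsSlowCutoff χ ε) (hε : 0 < ε) (hε1 : ε ≤ 1)
    (hu : IsRealH1 u) :
    (1 - ε) * localizedEnergy χ u ≤ localizedEnergy 1 fun x => √(χ x) * u x := by
  rw [localizedEnergy, ← integral_const_mul]
  refine integral_mono ((hu.integrable_energy hχ.memLp_top).const_mul _)
    ((hu.sqrt_mul hχ hε hε1).integrable_energy (memLp_top_const 1)) fun x => ?_
  have hle := neg_le_of_abs_le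
    (hχ.abs_gradSq_sqrt_mul_sub_le hε hε1 (hu.contDiff.differentiable one_ne_zero x))
  simp only [Pi.one_apply, mul_one, mul_pow, Real.sq_sqrt (hχ.pos x).le]
  linarith

theorem IsSlowCutoff.localizedForm_ge (hχ : IsSlowCutoff χ ε) (hε : 0 < ε) (hε1 : ε ≤ 1)
    (hV : MemLp V ∞) (hχV : ∀ x, χ x = 1 ∨ V x ≤ 1 / 2) (hu : IsRealH1 u) :
    localizedForm 1 V (fun x => √(χ x) * u x) - ε * localizedEnergy χ u
      + 1 / 2 * ∫ x, (1 - χ x) * u x ^ 2 ≤ localizedForm χ V u := by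
  have hv := hu.sqrt_mul hχ hε hε1
  have int_form := hv.integrable_form (χ := 1) (memLp_top_const 1) hV
  have int_energy := (hu.integrable_energy hχ.memLp_top).const_mul ε
  have int_diff := int_form.sub' int_energy
  have int_mass : Integrable fun x => 1 / 2 * ((1 - χ x) * u x ^ 2) :=
    (hu.memLp.integrable_sq.mul_of_top_right
      ((memLp_top_const 1).sub hχ.memLp_top)).const_mul _
  rw [localizedForm, localizedEnergy, ← integral_const_mul, ← integral_const_mul,
    ← integral_sub int_form int_energy, ← integral_add int_diff int_mass]
  refine integral_mono (int_diff.add int_mass)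
    (hu.integrable_form hχ.memLp_top hV) fun x => ?_
  have hgrad := le_of_abs_le
    (hχ.abs_gradSq_sqrt_mul_sub_le hε hε1 (hu.contDiff.differentiable one_ne_zero x))
  have hmass : 0 ≤ (1 - χ x) * (1 / 2 - V x) * u x ^ 2 := by
    rcases hχV x with h | h
    · simp [h]
    · exact mul_nonneg (mul_nonneg (sub_nonneg.2 (hχ.le_one x)) (sub_nonneg.2 h)) (sq_nonneg _)
  simp only [Pi.one_apply, mul_one, mul_pow, Real.sq_sqrt (hχ.pos x).le]
  linarith

theorem IsSlowCutoff.penalty_le {p : ι → EuclideanSpace ℝ (Fin d) → ℝ} (hχ : IsSlowCutoff χ ε)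
    (hp : ∀ i, MemLp (p i) 2) (hu : MemLp u 2) (hpu : ∀ i, ∫ x, p i x * u x = 0) :
    penalty p (fun x => √(χ x) * u x) ≤
      (∑ i, ∫ x, (1 - √(χ x)) * p i x ^ 2) * ∫ x, (1 - χ x) * u x ^ 2 := by
  rw [Finset.sum_mul]
  refine Finset.sum_le_sum fun i _ => ?_
  simpa only [Real.sq_sqrt (hχ.pos _).le] using sq_integral_mul_cutoff_le
    hχ.contDiff_sqrt.continuous.aestronglyMeasurable hχ.sqrt_mem_Icc (hp i) hu (hpu i)

theorem IsSlowCutoff.localizedForm_coercive {p : ι → EuclideanSpace ℝ (Fin d) → ℝ} {ν₁ ν₂ : ℝ}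
    (hχ : IsSlowCutoff χ ε) (hε : 0 < ε) (hν₁ : 0 ≤ ν₁) (hεν : ε * (1 + ν₁) ≤ ν₁ / 2)
    (hV : MemLp V ∞) (hχV : ∀ x, χ x = 1 ∨ V x ≤ 1 / 2) (hp : ∀ i, MemLp (p i) 2) (hν₂ : 0 ≤ ν₂)
    (hχp : ν₂ * ∑ i, ∫ x, (1 - √(χ x)) * p i x ^ 2 ≤ 1 / 2)
    (hpen : IsPenalizedCoercive V p ν₁ ν₂) (hu : IsRealH1 u) (hpu : ∀ i, ∫ x, p i x * u x = 0) :
    ν₁ / 2 * localizedEnergy χ u ≤ localizedForm χ V u := by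
  have hε1 : ε ≤ 1 := by nlinarith
  have energy_nonneg : 0 ≤ localizedEnergy χ u := integral_nonneg fun x =>
    mul_nonneg (add_nonneg (gradSq_nonneg u x) (sq_nonneg _)) (hχ.pos x).le
  have mass_nonneg : 0 ≤ ∫ x, (1 - χ x) * u x ^ 2 := integral_nonneg fun x =>
    mul_nonneg (sub_nonneg.2 (hχ.le_one x)) (sq_nonneg _)
  have hpenalty : ν₂ * penalty p (fun x => √(χ x) * u x) ≤ 1 / 2 * ∫ x, (1 - χ x) * u x ^ 2 :=
    calc ν₂ * penalty p (fun x => √(χ x) * u x)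
        ≤ ν₂ * ((∑ i, ∫ x, (1 - √(χ x)) * p i x ^ 2) * ∫ x, (1 - χ x) * u x ^ 2) := by
          gcongr
          exact hχ.penalty_le hp hu.memLp hpu
      _ = (ν₂ * ∑ i, ∫ x, (1 - √(χ x)) * p i x ^ 2) * ∫ x, (1 - χ x) * u x ^ 2 := by ring
      _ ≤ 1 / 2 * ∫ x, (1 - χ x) * u x ^ 2 := by gcongr
  calc ν₁ / 2 * localizedEnergy χ u
      ≤ ν₁ * ((1 - ε) * localizedEnergy χ u) - ε * localizedEnergy χ u := by
        nlinarith [mul_le_mul_of_nonneg_right hεν energy_nonneg]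
    _ ≤ ν₁ * localizedEnergy 1 (fun x => √(χ x) * u x) - ε * localizedEnergy χ u := by
        gcongr
        exact hχ.localizedEnergy_le hε hε1 hu
    _ ≤ localizedForm 1 V (fun x => √(χ x) * u x) - ε * localizedEnergy χ u
          + 1 / 2 * ∫ x, (1 - χ x) * u x ^ 2 := by
        linarith [hpen _ (hu.sqrt_mul hχ hε hε1)]
    _ ≤ localizedForm χ V u := hχ.localizedForm_ge hε hε1 hV hχV hu

end SlowCutoff

section Dilation

theorem exists_forall_norm_le_or_le {E : Type*} [NormedAddCommGroup E] [ProperSpace E] {V : E → ℝ}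
    {c : ℝ} (hV : Tendsto V (cocompact E) (𝓝 0)) (hc : 0 < c) : ∃ R, ∀ x, ‖x‖ ≤ R ∨ V x ≤ c := by
  obtain ⟨R, -, hR⟩ := (hasBasis_cobounded_norm.mem_iff (t := {x | V x ≤ c})).1
    (Metric.cobounded_eq_cocompact (α := E) ▸ hV.eventually_le_const hc)
  exact ⟨R, fun x => (le_total ‖x‖ R).imp_right fun h => hR h⟩

theorem memLp_top_of_tendsto_cocompact {X : Type*} [TopologicalSpace X]
    [SecondCountableTopology X] [MeasurableSpace X] [OpensMeasurableSpace X] {μ : Measure X}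
    {V : X → ℝ} (hV : Continuous V) (hlim : Tendsto V (cocompact X) (𝓝 0)) : MemLp V ∞ μ :=
  let V₀ : ZeroAtInftyContinuousMap X ℝ := ⟨⟨V, hV⟩, hlim⟩
  memLp_top_of_bound hV.aestronglyMeasurable ‖V₀.toBCF‖ <|
    ae_of_all _ fun x => V₀.toBCF.norm_coe_le_norm x

theorem norm_inv_smul_le_one {E : Type*} [NormedAddCommGroup E] [NormedSpace ℝ E] {A : ℝ}
    (hA : 0 < A) {x : E} (hx : ‖x‖ ≤ A) : ‖A⁻¹ • x‖ ≤ 1 := by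
  rw [norm_smul, norm_inv, Real.norm_of_nonneg hA.le]
  exact inv_mul_le_one_of_le₀ hx hA.le

theorem IsSlowCutoff.tendsto_sum_integral_one_sub_sqrt {d : ℕ} {ι : Type*} [Fintype ι]
    {Φ : EuclideanSpace ℝ (Fin d) → ℝ} {p : ι → EuclideanSpace ℝ (Fin d) → ℝ} {C : ℝ}
    (hΦ : IsSlowCutoff Φ C) (hΦone : ∀ x, ‖x‖ ≤ 1 → Φ x = 1) (hp : ∀ i, MemLp (p i) 2) :
    Tendsto (fun A : ℝ => ∑ i, ∫ x, (1 - √(Φ (A⁻¹ • x))) * p i x ^ 2) atTop (𝓝 0) := by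
  rw [← Finset.sum_const_zero (s := Finset.univ (α := ι))]
  refine tendsto_finsetSum _ fun i _ => tendsto_integral_one_sub_mul
    (.of_forall fun A => (hΦ.comp_smul A⁻¹).contDiff_sqrt.continuous.aestronglyMeasurable)
    (.of_forall fun A => (hΦ.comp_smul A⁻¹).sqrt_mem_Icc) (fun x => ?_) (hp i).integrable_sq
  refine tendsto_const_nhds.congr' ?_
  filter_upwards [eventually_ge_atTop ‖x‖, eventually_gt_atTop 0] with A hA hA0
  rw [hΦone _ (norm_inv_smul_le_one hA0 hA), Real.sqrt_one]

theorem IsSlowCutoff.eventually_localizedForm_coercive {d : ℕ} {ι : Type*} [Fintype ι]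
    {Φ V : EuclideanSpace ℝ (Fin d) → ℝ} {p : ι → EuclideanSpace ℝ (Fin d) → ℝ} {C ν₁ ν₂ : ℝ}
    (hΦ : IsSlowCutoff Φ C) (hΦone : ∀ x, ‖x‖ ≤ 1 → Φ x = 1) (hVcont : Continuous V)
    (hV : Tendsto V (cocompact _) (𝓝 0)) (hp : ∀ i, MemLp (p i) 2) (hν₁ : 0 < ν₁) (hν₂ : 0 ≤ ν₂)
    (hpen : IsPenalizedCoercive V p ν₁ ν₂) :
    ∀ᶠ A : ℝ in atTop, ∀ u, IsRealH1 u → (∀ i, ∫ x, p i x * u x = 0) →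
      ν₁ / 2 * localizedEnergy (fun x => Φ (A⁻¹ • x)) u ≤
        localizedForm (fun x => Φ (A⁻¹ • x)) V u := by
  set ε := ν₁ / (2 * (1 + ν₁)) with hε_def
  have hε : 0 < ε := by positivity
  have hεν : ε * (1 + ν₁) ≤ ν₁ / 2 := by
    rw [hε_def]
    field_simp
    rfl
  obtain ⟨R, hR⟩ := exists_forall_norm_le_or_le hV one_half_pos
  have weights_small := ((hΦ.tendsto_sum_integral_one_sub_sqrt hΦone hp).const_mul
    ν₂).eventually_le_const (by rw [mul_zero]; exact one_half_pos)
  filter_upwards [hΦ.eventually_comp_inv_smul hε, weights_small, eventually_ge_atTop R,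
    eventually_gt_atTop 0] with A hslow hweights hA hA0 u hu hpu
  have hΦV (x : EuclideanSpace ℝ (Fin d)) : Φ (A⁻¹ • x) = 1 ∨ V x ≤ 1 / 2 :=
    (hR x).imp_left fun hx => hΦone _ (norm_inv_smul_le_one hA0 (hx.trans hA))
  exact hslow.localizedForm_coercive hε hν₁.le hεν (memLp_top_of_tendsto_cocompact hVcont hV)
    hΦV hp hν₂ hweights hpen hu hpu

end Dilation

section SuperpolynomialDecay

variable {E : Type*} [NormedAddCommGroup E]

theorem superpolynomialDecay_of_abs_le_exp [ProperSpace E] {f : E → ℝ} {C δ : ℝ} (hδ : 0 < δ)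
    (hf : ∀ x, |f x| ≤ C * Real.exp (-δ * ‖x‖)) :
    SuperpolynomialDecay (cocompact E) norm f := by
  have hexp : SuperpolynomialDecay (cocompact E) norm fun x => Real.exp (-δ * ‖x‖) := fun n => by
    simpa [Function.comp_def, Real.rpow_natCast] using
      (tendsto_rpow_mul_exp_neg_mul_atTop_nhds_zero n δ hδ).comp
        (tendsto_norm_cocompact_atTop (E := E))
  exact (hexp.const_mul C).trans_abs_le fun x => (hf x).trans (le_abs_self _)

theorem memLp_two_of_superpolynomialDecay [NormedSpace ℝ E] [FiniteDimensional ℝ E]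
    [MeasurableSpace E] [BorelSpace E] {μ : Measure E} [μ.IsAddHaarMeasure] {f : E → ℝ}
    (hcont : Continuous f) (hf : SuperpolynomialDecay (cocompact E) norm f) : MemLp f 2 μ := by
  have : ProperSpace E := FiniteDimensional.proper ℝ E
  rw [memLp_two_iff_integrable_sq hcont.aestronglyMeasurable]
  set m := Module.finrank ℝ E + 1
  have hm : (Module.finrank ℝ E : ℝ) < m := by exact_mod_cast Nat.lt_succ_self _
  have hdecay := (hf.mul hf).polynomial_mul ((1 + Polynomial.X) ^ m) 0
  have hO : (fun x => f x ^ 2) =O[cocompact E] fun x => (1 + ‖x‖) ^ (-(m : ℝ)) := by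
    refine (((hdecay.isBigO_one ℝ).mul (isBigO_refl (fun x : E => (1 + ‖x‖) ^ (-(m : ℝ))) _)).congr
      (fun x => ?_) fun x => one_mul _)
    have hpos : 0 < 1 + ‖x‖ := by positivity
    simp only [Polynomial.eval_pow, Polynomial.eval_add, Polynomial.eval_one, Polynomial.eval_X,
      Real.rpow_neg hpos.le, Real.rpow_natCast, Pi.mul_apply, pow_zero, one_mul]
    field_simp
  exact (hcont.pow 2).locallyIntegrable.integrable_of_isBigO_cocompact hO
    ((integrable_one_add_norm hm).integrableAtFilter _)

theorem superpolynomialDecay_coord_mul {ι : Type*} [Fintype ι] {f : EuclideanSpace ℝ ι → ℝ}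
    (hf : SuperpolynomialDecay (cocompact _) norm f) (i : ι) :
    SuperpolynomialDecay (cocompact _) norm fun x => x i * f x :=
  hf.param_mul.trans_abs_le fun x => by
    rw [Pi.mul_apply, abs_mul, abs_mul, abs_norm]
    gcongr
    exact PiLp.norm_apply_le x i

end SuperpolynomialDecay

section GroundState

variable {d : ℕ} {Q ρ f₁ f₂ : EuclideanSpace ℝ (Fin d) → ℝ}

/-- The potential of the linearized operator `L₊`, which acts on real parts. -/
def plusPotential (Q : EuclideanSpace ℝ (Fin d) → ℝ) (x : EuclideanSpace ℝ (Fin d)) : ℝ :=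
  (1 + 4 / (d : ℝ)) * Q x ^ ((4 : ℝ) / d)

/-- The potential of the linearized operator `L₋`, which acts on imaginary parts. -/
def minusPotential (Q : EuclideanSpace ℝ (Fin d) → ℝ) (x : EuclideanSpace ℝ (Fin d)) : ℝ :=
  Q x ^ ((4 : ℝ) / d)

/-- The weights `Q`, `x_j Q` and `|x|² Q` in the orthogonality conditions on real parts. -/
def plusWeights (Q : EuclideanSpace ℝ (Fin d) → ℝ) :
    Unit ⊕ Fin d ⊕ Unit → EuclideanSpace ℝ (Fin d) → ℝ :=
  Sum.elim (fun _ => Q) (Sum.elim (fun j x => x j * Q x) fun _ x => ‖x‖ ^ 2 * Q x)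

/-- The weights `∂_j Q`, `ΛQ` and `ρ` in the orthogonality conditions on imaginary parts. -/
def minusWeights (Q ρ : EuclideanSpace ℝ (Fin d) → ℝ) :
    Fin d ⊕ Unit ⊕ Unit → EuclideanSpace ℝ (Fin d) → ℝ :=
  Sum.elim (pd Q) (Sum.elim (fun _ x => (d : ℝ) / 2 * Q x + ∑ i, x i * pd Q i x) fun _ => ρ)

theorem penalty_plusWeights (Q f : EuclideanSpace ℝ (Fin d) → ℝ) :
    penalty (plusWeights Q) f = (∫ x, Q x * f x) ^ 2 +
      ((∑ j, (∫ x, x j * Q x * f x) ^ 2) + (∫ x, ‖x‖ ^ 2 * Q x * f x) ^ 2) := by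
  simp [penalty, plusWeights, Fintype.sum_sum_type]

theorem penalty_minusWeights (Q ρ f : EuclideanSpace ℝ (Fin d) → ℝ) :
    penalty (minusWeights Q ρ) f = (∑ j, (∫ x, pd Q j x * f x) ^ 2) +
      ((∫ x, ((d : ℝ) / 2 * Q x + ∑ i, x i * pd Q i x) * f x) ^ 2 + (∫ x, ρ x * f x) ^ 2) := by
  simp [penalty, minusWeights, Fintype.sum_sum_type]

theorem inKset_iff : InKset Q ρ f₁ f₂ ↔
    (∀ i, ∫ x, plusWeights Q i x * f₁ x = 0) ∧ ∀ i, ∫ x, minusWeights Q ρ i x * f₂ x = 0 := by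
  simp [InKset, plusWeights, minusWeights, Sum.forall, and_assoc]

theorem memLp_plusWeights (hQ : Continuous Q)
    (hQdecay : SuperpolynomialDecay (cocompact _) norm Q) (i : Unit ⊕ Fin d ⊕ Unit) :
    MemLp (plusWeights Q i) 2 := by
  rcases i with _ | j | _
  · exact memLp_two_of_superpolynomialDecay hQ hQdecay
  · exact memLp_two_of_superpolynomialDecay
      (f := fun x => x j * Q x) (by fun_prop) (superpolynomialDecay_coord_mul hQdecay j)
  · exact memLp_two_of_superpolynomialDecay
      (f := fun x => ‖x‖ ^ 2 * Q x) (by fun_prop) (hQdecay.param_pow_mul 2)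

theorem memLp_minusWeights (hQ : ContDiff ℝ 1 Q)
    (hQdecay : SuperpolynomialDecay (cocompact _) norm Q)
    (hdQdecay : ∀ i, SuperpolynomialDecay (cocompact _) norm (pd Q i)) (hρ : Continuous ρ)
    (hρdecay : SuperpolynomialDecay (cocompact _) norm ρ) (i : Fin d ⊕ Unit ⊕ Unit) :
    MemLp (minusWeights Q ρ i) 2 := by
  have memLp_Q := memLp_two_of_superpolynomialDecay (μ := volume) hQ.continuous hQdecay
  have memLp_coord_mul_pd (j : Fin d) : MemLp (fun x => x j * pd Q j x) 2 :=
    memLp_two_of_superpolynomialDecay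
      (((EuclideanSpace.proj j).continuous).mul (continuous_pd hQ j))
      (superpolynomialDecay_coord_mul (hdQdecay j) j)
  rcases i with j | _ | _
  · exact memLp_two_of_superpolynomialDecay (continuous_pd hQ j) (hdQdecay j)
  · exact (memLp_Q.const_mul _).add (memLp_finsetSum _ fun j _ => memLp_coord_mul_pd j)
  · exact memLp_two_of_superpolynomialDecay hρ hρdecay

theorem continuous_minusPotential (hQ : Continuous Q) (hpos : ∀ x, 0 < Q x) :
    Continuous (minusPotential Q) :=
  hQ.rpow_const fun x => Or.inl (hpos x).ne'

theorem tendsto_minusPotential (hd : 1 ≤ d) (hQ : Tendsto Q (cocompact _) (𝓝 0)) :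
    Tendsto (minusPotential Q) (cocompact _) (𝓝 0) := by
  have exponent_pos : (0 : ℝ) < 4 / d := by positivity
  simpa only [minusPotential, Real.zero_rpow exponent_pos.ne'] using!
    hQ.rpow_const (Or.inr exponent_pos.le)

theorem continuous_plusPotential (hQ : Continuous Q) (hpos : ∀ x, 0 < Q x) :
    Continuous (plusPotential Q) :=
  (continuous_minusPotential hQ hpos).const_mul _

theorem tendsto_plusPotential (hd : 1 ≤ d) (hQ : Tendsto Q (cocompact _) (𝓝 0)) :
    Tendsto (plusPotential Q) (cocompact _) (𝓝 0) := by
  simpa only [mul_zero] using! (tendsto_minusPotential hd hQ).const_mul (1 + 4 / (d : ℝ))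

theorem isH1_iff : IsH1 f₁ f₂ ↔ IsRealH1 f₁ ∧ IsRealH1 f₂ := by
  have integrable_iff (h₁ : ContDiff ℝ 1 f₁) (h₂ : ContDiff ℝ 1 f₂) :
      Integrable (fun x => f₁ x ^ 2 + f₂ x ^ 2) ↔ MemLp f₁ 2 ∧ MemLp f₂ 2 := by
    rw [memLp_two_iff_integrable_sq h₁.continuous.aestronglyMeasurable,
      memLp_two_iff_integrable_sq h₂.continuous.aestronglyMeasurable]
    exact integrable_add_iff_of_nonneg (h₁.continuous.pow 2).aestronglyMeasurable
      (ae_of_all _ fun _ => sq_nonneg _) (ae_of_all _ fun _ => sq_nonneg _)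
  have integrable_gradSq_iff (h₁ : ContDiff ℝ 1 f₁) :
      Integrable (fun x => ∑ i, (pd f₁ i x ^ 2 + pd f₂ i x ^ 2)) ↔
        Integrable (gradSq f₁) ∧ Integrable (gradSq f₂) := by
    simp only [Finset.sum_add_distrib]
    exact integrable_add_iff_of_nonneg (continuous_gradSq h₁).aestronglyMeasurable
      (ae_of_all _ (gradSq_nonneg f₁)) (ae_of_all _ (gradSq_nonneg f₂))
  constructor
  · rintro ⟨h₁, h₂, hint, hgrad⟩
    obtain ⟨hL₁, hL₂⟩ := (integrable_iff h₁ h₂).1 hint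
    obtain ⟨hg₁, hg₂⟩ := (integrable_gradSq_iff h₁).1 hgrad
    exact ⟨⟨h₁, hL₁, hg₁⟩, ⟨h₂, hL₂, hg₂⟩⟩
  · rintro ⟨h₁, h₂⟩
    exact ⟨h₁.contDiff, h₂.contDiff,
      (integrable_iff h₁.contDiff h₂.contDiff).2 ⟨h₁.memLp, h₂.memLp⟩,
      (integrable_gradSq_iff h₁.contDiff).2 ⟨h₁.integrable_gradSq, h₂.integrable_gradSq⟩⟩

theorem integral_energy_eq {χ : EuclideanSpace ℝ (Fin d) → ℝ} (h₁ : IsRealH1 f₁)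
    (h₂ : IsRealH1 f₂) (hχ : MemLp χ ∞) :
    ∫ x, ((∑ i, (pd f₁ i x ^ 2 + pd f₂ i x ^ 2)) + (f₁ x ^ 2 + f₂ x ^ 2)) * χ x =
      localizedEnergy χ f₁ + localizedEnergy χ f₂ := by
  rw [localizedEnergy, localizedEnergy,
    ← integral_add (h₁.integrable_energy hχ) (h₂.integrable_energy hχ)]
  congr with x
  rw [Finset.sum_add_distrib, gradSq, gradSq]
  ring

theorem integral_form_eq {χ : EuclideanSpace ℝ (Fin d) → ℝ} (h₁ : IsRealH1 f₁)
    (h₂ : IsRealH1 f₂) (hχ : MemLp χ ∞) (hplus : MemLp (plusPotential Q) ∞)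
    (hminus : MemLp (minusPotential Q) ∞) :
    ∫ x, ((∑ i, (pd f₁ i x ^ 2 + pd f₂ i x ^ 2)) * χ x + (f₁ x ^ 2 + f₂ x ^ 2)
        - (1 + 4 / (d : ℝ)) * Q x ^ ((4 : ℝ) / d) * f₁ x ^ 2 - Q x ^ ((4 : ℝ) / d) * f₂ x ^ 2) =
      localizedForm χ (plusPotential Q) f₁ + localizedForm χ (minusPotential Q) f₂ := by
  rw [localizedForm, localizedForm,
    ← integral_add (h₁.integrable_form hχ hplus) (h₂.integrable_form hχ hminus)]
  congr with x
  rw [Finset.sum_add_distrib, gradSq, gradSq, plusPotential, minusPotential]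
  ring

theorem H1normSq_eq (h₁ : IsRealH1 f₁) (h₂ : IsRealH1 f₂) :
    H1normSq f₁ f₂ = localizedEnergy 1 f₁ + localizedEnergy 1 f₂ := by
  have hH1 := isH1_iff.2 ⟨h₁, h₂⟩
  rw [H1normSq, add_comm, ← integral_add hH1.2.2.2 hH1.2.2.1,
    ← integral_energy_eq (χ := 1) h₁ h₂ (memLp_top_const 1)]
  simp only [Pi.one_apply, mul_one]

theorem Bform_eq (Q f₁ f₂ : EuclideanSpace ℝ (Fin d) → ℝ) : Bform Q f₁ f₂ =
    localizedForm 1 (plusPotential Q) f₁ + localizedForm 1 (minusPotential Q) f₂ := by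
  simp [Bform, localizedForm, gradSq, plusPotential, minusPotential]

theorem isPenalizedCoercive_of_Bform {ν₁ ν₂ : ℝ} (hpen : ∀ f₁ f₂, IsH1 f₁ f₂ →
      Bform Q f₁ f₂ ≥ ν₁ * H1normSq f₁ f₂
        - ν₂ * (penalty (plusWeights Q) f₁ + penalty (minusWeights Q ρ) f₂)) :
    IsPenalizedCoercive (plusPotential Q) (plusWeights Q) ν₁ ν₂ ∧
      IsPenalizedCoercive (minusPotential Q) (minusWeights Q ρ) ν₁ ν₂ := by
  refine ⟨fun u hu => ?_, fun u hu => ?_⟩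
  · simpa [Bform_eq, H1normSq_eq hu isRealH1_zero, localizedEnergy_zero, localizedForm_zero,
      penalty_zero] using hpen u 0 (isH1_iff.2 ⟨hu, isRealH1_zero⟩)
  · simpa [Bform_eq, H1normSq_eq isRealH1_zero hu, localizedEnergy_zero, localizedForm_zero,
      penalty_zero] using hpen 0 u (isH1_iff.2 ⟨isRealH1_zero, hu⟩)

end GroundState

theorem localized_coercivity_general {d : ℕ} (hd : 1 ≤ d) {Q ρ Φ : EuclideanSpace ℝ (Fin d) → ℝ}
    {C : ℝ} (hQ : ContDiff ℝ 1 Q) (hQpos : ∀ x, 0 < Q x)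
    (hQdecay : SuperpolynomialDecay (cocompact _) norm Q)
    (hdQdecay : ∀ i, SuperpolynomialDecay (cocompact _) norm (pd Q i))
    (hρ : Continuous ρ) (hρdecay : SuperpolynomialDecay (cocompact _) norm ρ)
    (hΦ : IsSlowCutoff Φ C) (hΦone : ∀ x, ‖x‖ ≤ 1 → Φ x = 1)
    (hpen : ∃ ν₁ > (0 : ℝ), ∃ ν₂ > (0 : ℝ), ∀ f₁ f₂, IsH1 f₁ f₂ →
      Bform Q f₁ f₂ ≥ ν₁ * H1normSq f₁ f₂
        - ν₂ * (penalty (plusWeights Q) f₁ + penalty (minusWeights Q ρ) f₂)) :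
    ∃ ν > (0 : ℝ), ∃ A₀ > (0 : ℝ), ∀ A ≥ A₀, ∀ f₁ f₂, IsH1 f₁ f₂ → InKset Q ρ f₁ f₂ →
      (∫ x, ((∑ i, (pd f₁ i x ^ 2 + pd f₂ i x ^ 2)) * Φ (A⁻¹ • x) + (f₁ x ^ 2 + f₂ x ^ 2)
          - (1 + 4 / (d : ℝ)) * Q x ^ ((4 : ℝ) / d) * f₁ x ^ 2
          - Q x ^ ((4 : ℝ) / d) * f₂ x ^ 2)) ≥
        ν * ∫ x, ((∑ i, (pd f₁ i x ^ 2 + pd f₂ i x ^ 2)) + (f₁ x ^ 2 + f₂ x ^ 2))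
          * Φ (A⁻¹ • x) := by
  obtain ⟨ν₁, hν₁, ν₂, hν₂, hpen⟩ := hpen
  obtain ⟨hpen_plus, hpen_minus⟩ := isPenalizedCoercive_of_Bform hpen
  have hQlim : Tendsto Q (cocompact _) (𝓝 0) := by simpa using hQdecay 0
  have hplus := continuous_plusPotential hQ.continuous hQpos
  have hminus := continuous_minusPotential hQ.continuous hQpos
  have hplus_lim := tendsto_plusPotential hd hQlim
  have hminus_lim := tendsto_minusPotential hd hQlim
  obtain ⟨A₀, hA₀⟩ := eventually_atTop.1 <|
    (hΦ.eventually_localizedForm_coercive hΦone hplus hplus_lim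
      (memLp_plusWeights hQ.continuous hQdecay) hν₁ hν₂.le hpen_plus).and <|
    hΦ.eventually_localizedForm_coercive hΦone hminus hminus_lim
      (memLp_minusWeights hQ hQdecay hdQdecay hρ hρdecay) hν₁ hν₂.le hpen_minus
  refine ⟨ν₁ / 2, half_pos hν₁, max A₀ 1, by positivity, fun A hA f₁ f₂ hH1 hK => ?_⟩
  obtain ⟨h₁, h₂⟩ := isH1_iff.1 hH1
  obtain ⟨hK₁, hK₂⟩ := inKset_iff.1 hK
  obtain ⟨hcoercive₁, hcoercive₂⟩ := hA₀ A ((le_max_left _ _).trans hA)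
  have hχ := (hΦ.comp_smul A⁻¹).memLp_top
  rw [integral_energy_eq h₁ h₂ hχ, mul_add, integral_form_eq h₁ h₂ hχ
    (memLp_top_of_tendsto_cocompact hplus hplus_lim)
    (memLp_top_of_tendsto_cocompact hminus hminus_lim)]
  exact add_le_add (hcoercive₁ f₁ h₁ hK₁) (hcoercive₂ f₂ h₂ hK₂)

/-- localized coercivity of the quadratic form `B` on the set `K`. -/
theorem localized_coercivity (d : ℕ) (hd : 1 ≤ d)
    (Q : EuclideanSpace ℝ (Fin d) → ℝ)
    (hQsmooth : ContDiff ℝ (⊤ : ℕ∞) Q) (hQpos : ∀ x, 0 < Q x)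
    (hQradial : ∀ x y : EuclideanSpace ℝ (Fin d), ‖x‖ = ‖y‖ → Q x = Q y)
    (hQsol : ∀ x, lap Q x - Q x + Q x ^ ((1 : ℝ) + 4 / d) = 0)
    (C₀ δ₀ : ℝ) (hC₀ : 0 < C₀) (hδ₀ : 0 < δ₀)
    (hQdecay : ∀ x : EuclideanSpace ℝ (Fin d),
      |Q x| ≤ C₀ * Real.exp (-δ₀ * ‖x‖) ∧
      (∀ i, |pd Q i x| ≤ C₀ * Real.exp (-δ₀ * ‖x‖)) ∧
      (∀ i j, |pd (pd Q i) j x| ≤ C₀ * Real.exp (-δ₀ * ‖x‖)))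
    (ρ : EuclideanSpace ℝ (Fin d) → ℝ)
    (hρsmooth : ContDiff ℝ 2 ρ)
    (hρradial : ∀ x y : EuclideanSpace ℝ (Fin d), ‖x‖ = ‖y‖ → ρ x = ρ y)
    (hρeq : ∀ x, -lap ρ x + ρ x - (1 + 4 / (d : ℝ)) * Q x ^ ((4 : ℝ) / d) * ρ x
      = -(‖x‖ ^ 2 * Q x))
    (hρdecay : ∀ x : EuclideanSpace ℝ (Fin d),
      |ρ x| + Real.sqrt (∑ i, pd ρ i x ^ 2) ≤ C₀ * Real.exp (-δ₀ * ‖x‖))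
    (Φ : EuclideanSpace ℝ (Fin d) → ℝ)
    (hΦsmooth : ContDiff ℝ (⊤ : ℕ∞) Φ)
    (hΦradial : ∀ x y : EuclideanSpace ℝ (Fin d), ‖x‖ = ‖y‖ → Φ x = Φ y)
    (hΦone : ∀ x : EuclideanSpace ℝ (Fin d), ‖x‖ ≤ 1 → Φ x = 1)
    (hΦexp : ∀ x : EuclideanSpace ℝ (Fin d), 2 ≤ ‖x‖ → Φ x = Real.exp (-‖x‖))
    (hΦbdd : ∀ x : EuclideanSpace ℝ (Fin d), 0 < Φ x ∧ Φ x ≤ 1)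
    (CΦ : ℝ)
    (hΦgrad : ∀ x : EuclideanSpace ℝ (Fin d),
      Real.sqrt (∑ i, pd Φ i x ^ 2) ≤ CΦ * Φ x)
    (hpen : ∃ ν₁ > (0 : ℝ), ∃ ν₂ > (0 : ℝ), ∀ f₁ f₂ : EuclideanSpace ℝ (Fin d) → ℝ,
      IsH1 f₁ f₂ →
      Bform Q f₁ f₂ ≥ ν₁ * H1normSq f₁ f₂
        - ν₂ * ((∫ x : EuclideanSpace ℝ (Fin d), Q x * f₁ x) ^ 2
          + (∑ j, (∫ x : EuclideanSpace ℝ (Fin d), x j * Q x * f₁ x) ^ 2)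
          + (∫ x : EuclideanSpace ℝ (Fin d), ‖x‖ ^ 2 * Q x * f₁ x) ^ 2
          + (∑ j, (∫ x : EuclideanSpace ℝ (Fin d), pd Q j x * f₂ x) ^ 2)
          + (∫ x : EuclideanSpace ℝ (Fin d),
              ((d : ℝ) / 2 * Q x + ∑ i, x i * pd Q i x) * f₂ x) ^ 2
          + (∫ x : EuclideanSpace ℝ (Fin d), ρ x * f₂ x) ^ 2)) :
    ∃ ν > (0 : ℝ), ∃ A₀ > (0 : ℝ), ∀ A ≥ A₀,
      ∀ f₁ f₂ : EuclideanSpace ℝ (Fin d) → ℝ,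
        IsH1 f₁ f₂ → InKset Q ρ f₁ f₂ →
        (∫ x : EuclideanSpace ℝ (Fin d),
            ((∑ i, (pd f₁ i x ^ 2 + pd f₂ i x ^ 2)) * Φ (A⁻¹ • x)
              + (f₁ x ^ 2 + f₂ x ^ 2)
              - (1 + 4 / (d : ℝ)) * Q x ^ ((4 : ℝ) / d) * f₁ x ^ 2
              - Q x ^ ((4 : ℝ) / d) * f₂ x ^ 2))
          ≥ ν * ∫ x : EuclideanSpace ℝ (Fin d),
              ((∑ i, (pd f₁ i x ^ 2 + pd f₂ i x ^ 2)) + (f₁ x ^ 2 + f₂ x ^ 2))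
                * Φ (A⁻¹ • x) := by
  exact localized_coercivity_general hd (hQsmooth.of_le (by exact_mod_cast le_top)) hQpos
    (superpolynomialDecay_of_abs_le_exp hδ₀ fun x => (hQdecay x).1)
    (fun i => superpolynomialDecay_of_abs_le_exp hδ₀ fun x => (hQdecay x).2.1 i)
    hρsmooth.continuous (superpolynomialDecay_of_abs_le_exp hδ₀ fun x =>
      le_of_add_le_of_nonneg_left (hρdecay x) (Real.sqrt_nonneg _))
    ⟨hΦsmooth.of_le (by exact_mod_cast le_top), fun x => (hΦbdd x).1, fun x => (hΦbdd x).2, hΦgrad⟩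
    hΦone (by simpa only [penalty_plusWeights, penalty_minusWeights, add_assoc] using hpen)
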